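/- Fix a nonzero k = (k1,k2) ∈ ℕ₀². For R > 0 let L_R(k) = { l ∈ ℕ₀² : 0 < ‖l‖ ≤ R, l1 ≠ k1, l2 ≠ k2 }. Then lim_{R→∞} (1/#L_R(k)) · Σ_{l ∈ L_R(k)} C(k,l) = −3·(k1² + k2²)/(8·S_T). (Equivalently, the normalized Ricci curvature of SDiff(𝕂) in the direction of the basis stream function ξ_k equals −3‖k‖²/(16·S_𝕂), where S_𝕂 = 2π² is the area of the Klein bottle.) -/

import Mathlib

/-- Area of the flat torus ℝ²/(2πℤ)². -/
noncomputable def STorus : ℝ := 4 * Real.pi ^ 2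

/-- Cross product k×l = k1·l2 − k2·l1. -/
def cross (k l : ℤ × ℤ) : ℤ := k.1 * l.2 - k.2 * l.1

/-- Squared norm ‖k‖² = k1² + k2². -/
def nsq (k : ℤ × ℤ) : ℤ := k.1 ^ 2 + k.2 ^ 2

/-- Reflection l̄ = (l1, −l2). -/
def conjPt (l : ℤ × ℤ) : ℤ × ℤ := (l.1, -l.2)

/-- Embedding of ℕ₀² into ℤ². -/
def emb (k : ℕ × ℕ) : ℤ × ℤ := ((k.1 : ℤ), (k.2 : ℤ))

/-- Sectional curvature C(k,l) of SDiff(𝕂) in the plane spanned by ξ_k, η_l. -/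
noncomputable def Ccurv (k l : ℤ × ℤ) : ℝ :=
  -(1 / (4 * STorus * (nsq k : ℝ) * (nsq l : ℝ))) *
    ((cross k l : ℝ) ^ 4 / (nsq (k + l) : ℝ) +
     (cross k l : ℝ) ^ 4 / (nsq (k - l) : ℝ) +
     (cross k (conjPt l) : ℝ) ^ 4 / (nsq (k + conjPt l) : ℝ) +
     (cross k (conjPt l) : ℝ) ^ 4 / (nsq (k - conjPt l) : ℝ))

/-- L_R(k) = { l ∈ ℕ₀² : 0 < ‖l‖ ≤ R, l1 ≠ k1, l2 ≠ k2 }. -/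
def LR (k : ℕ × ℕ) (R : ℕ) : Finset (ℕ × ℕ) :=
  (Finset.range (R + 1) ×ˢ Finset.range (R + 1)).filter
    (fun l => 0 < l.1 ^ 2 + l.2 ^ 2 ∧ l.1 ^ 2 + l.2 ^ 2 ≤ R ^ 2 ∧
      l.1 ≠ k.1 ∧ l.2 ≠ k.2)

/-!
As `l → ∞`, the curvature `Ccurv k l` approaches a function of the direction of `l` alone, so its
averages over `LR k R` have the same limit as those of this homogeneous function of degree zero.
After rescaling by `1 / R` the latter are Riemann sums, and they converge to the mean over the
quarter disc. In polar coordinates this mean is an angular integral: the mean of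
`(k × e^{it})⁴ + (k × e^{-it})⁴` over `0 ≤ t ≤ π / 2` is `3 ‖k‖⁴ / 4`. The homogeneous function is
discontinuous at the origin; there it is squeezed between continuous functions.
-/

open Asymptotics Bornology Filter MeasureTheory Topology
open scoped BigOperators ComplexConjugate Pointwise

section Averages

variable {α ι : Type*} {l : Filter α}

lemma tendsto_of_tendsto_lower_of_tendsto_upper {u : α → ℝ} {L : ℝ} {lower upper : ℕ → α → ℝ}
    {a b : ℕ → ℝ} (lower_le : ∀ m x, lower m x ≤ u x) (le_upper : ∀ m x, u x ≤ upper m x)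
    (hlower : ∀ m, Tendsto (lower m) l (𝓝 (a m))) (hupper : ∀ m, Tendsto (upper m) l (𝓝 (b m)))
    (ha : Tendsto a atTop (𝓝 L)) (hb : Tendsto b atTop (𝓝 L)) : Tendsto u l (𝓝 L) := by
  refine tendsto_order.2 ⟨fun c hc => ?_, fun c hc => ?_⟩
  · obtain ⟨m, hm⟩ := (ha.eventually_const_lt hc).exists
    filter_upwards [(hlower m).eventually_const_lt hm] with x hx using hx.trans_le (lower_le m x)
  · obtain ⟨m, hm⟩ := (hb.eventually_lt_const hc).exists
    filter_upwards [(hupper m).eventually_lt_const hm] with x hx using (le_upper m x).trans_lt hx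

lemma tendsto_expect_zero_of_tendsto_cofinite {A : α → Finset ι} {u : ι → ℝ}
    (hA : Tendsto (fun x => (A x).card) l atTop) (hu : Tendsto u cofinite (𝓝 0)) :
    Tendsto (fun x => 𝔼 i ∈ A x, u i) l (𝓝 0) := by
  classical
  refine Metric.tendsto_nhds.2 fun ε hε => ?_
  have hfin : {i | ¬ |u i| < ε / 2}.Finite := by
    simpa using (Metric.tendsto_nhds.1 hu) (ε / 2) (half_pos hε)
  set S : ℝ := ∑ i ∈ hfin.toFinset, |u i|
  have hsum (x : α) : |∑ i ∈ A x, u i| ≤ S + (A x).card * (ε / 2) := by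
    calc |∑ i ∈ A x, u i| ≤ ∑ i ∈ A x, |u i| := Finset.abs_sum_le_sum_abs _ _
      _ ≤ ∑ i ∈ A x, ((if i ∈ hfin.toFinset then |u i| else 0) + ε / 2) := by
          refine Finset.sum_le_sum fun i _ => ?_
          split_ifs with hi
          · linarith
          · simpa using (not_not.1 (mt hfin.mem_toFinset.2 hi)).le
      _ ≤ S + (A x).card * (ε / 2) := by
          rw [Finset.sum_add_distrib, Finset.sum_const, nsmul_eq_mul, ← Finset.sum_filter]
          gcongr
          exact Finset.sum_le_sum_of_subset_of_nonneg
            (fun i hi => (Finset.mem_filter.1 hi).2) fun _ _ _ => abs_nonneg _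
  have hcard : Tendsto (fun x => ((A x).card : ℝ)) l atTop := tendsto_natCast_atTop_atTop.comp hA
  filter_upwards [hcard.eventually_gt_atTop 0, hcard.eventually_gt_atTop (S / (ε / 2))]
    with x hpos hlarge
  rw [div_lt_iff₀ (half_pos hε)] at hlarge
  rw [Real.dist_0_eq_abs, Finset.expect_eq_sum_div_card, abs_div, Nat.abs_cast, div_lt_iff₀ hpos]
  linarith [hsum x]

end Averages

section Homogeneous

lemma exists_forall_abs_le_of_homogeneous {E : Type*} [NormedAddCommGroup E] [NormedSpace ℝ E]
    [ProperSpace E] {f : E → ℝ} (hf : ContinuousOn f {0}ᶜ)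
    (hom : ∀ r : ℝ, 0 < r → ∀ z, f (r • z) = f z) : ∃ C, ∀ z, |f z| ≤ C := by
  obtain ⟨C, hC⟩ := (isCompact_sphere (0 : E) 1).exists_bound_of_continuousOn
    (hf.mono fun z hz => Metric.ne_of_mem_sphere hz one_ne_zero)
  refine ⟨max |f 0| C, fun z => ?_⟩
  rcases eq_or_ne z 0 with rfl | hz
  · exact le_max_left _ _
  · rw [← hom ‖z‖⁻¹ (by positivity)]
    exact (hC _ (by simp [norm_smul, hz])).trans (le_max_right _ _)

/-- The function `f` moved towards the constant `c` on the ball of radius `1 / m`. It is continuous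
when `f` is bounded and continuous away from the origin, and bounds `f` from below or above when
`c` does; it approximates such an `f` by continuous functions. -/
noncomputable def blendAtZero {E : Type*} [Norm E] (f : E → ℝ) (c : ℝ) (m : ℕ) (z : E) : ℝ :=
  c + min 1 (m * ‖z‖) * (f z - c)

variable {E : Type*} [NormedAddCommGroup E] {f : E → ℝ} {C c : ℝ}

lemma continuous_blendAtZero (hf : ContinuousOn f {0}ᶜ) (hC : ∀ z, |f z| ≤ C) (c : ℝ) (m : ℕ) :
    Continuous (blendAtZero f c m) := by
  refine continuous_const.add (continuous_iff_continuousAt.2 fun z => ?_)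
  have hmin : Continuous fun z : E => min 1 (m * ‖z‖) := by fun_prop
  rcases eq_or_ne z 0 with rfl | hz
  · have hzero : Tendsto (fun z : E => min 1 (m * ‖z‖)) (𝓝 0) (𝓝 0) := by
      simpa using hmin.tendsto 0
    have hbdd : ∀ᶠ z in 𝓝 0, |f z - c| ≤ C + |c| :=
      Eventually.of_forall fun z => (abs_sub _ _).trans (by gcongr; exact hC z)
    simpa [ContinuousAt, mul_comm] using bdd_le_mul_tendsto_zero' _ hbdd hzero
  · exact hmin.continuousAt.mul
      ((hf.continuousAt (isOpen_compl_singleton.mem_nhds hz)).sub continuousAt_const)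

lemma blendAtZero_mem_segment (f : E → ℝ) (c : ℝ) (m : ℕ) (z : E) :
    blendAtZero f c m z ∈ segment ℝ c (f z) :=
  segment_eq_image' ℝ c (f z) ▸ ⟨min 1 (m * ‖z‖), ⟨by positivity, min_le_left _ _⟩, rfl⟩

lemma abs_blendAtZero_le (hC : ∀ z, |f z| ≤ C) (hc : |c| ≤ C) (m : ℕ) (z : E) :
    |blendAtZero f c m z| ≤ C :=
  abs_le.2 <| (convex_Icc (-C) C).segment_subset (abs_le.1 hc) (abs_le.1 (hC z))
    (blendAtZero_mem_segment f c m z)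

lemma blendAtZero_le_self {z : E} (hc : c ≤ f z) (m : ℕ) : blendAtZero f c m z ≤ f z :=
  (segment_subset_Icc hc (blendAtZero_mem_segment f c m z)).2

lemma self_le_blendAtZero {z : E} (hc : f z ≤ c) (m : ℕ) : f z ≤ blendAtZero f c m z :=
  (segment_subset_Icc hc (segment_symm ℝ c (f z) ▸ blendAtZero_mem_segment f c m z)).1

lemma tendsto_blendAtZero (f : E → ℝ) (c : ℝ) {z : E} (hz : z ≠ 0) :
    Tendsto (fun m => blendAtZero f c m z) atTop (𝓝 (f z)) := by
  have hmin : ∀ᶠ m : ℕ in atTop, min 1 (m * ‖z‖) = 1 := by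
    filter_upwards [(tendsto_natCast_atTop_atTop.atTop_mul_const
      (norm_pos_iff.2 hz)).eventually_ge_atTop 1] with m hm using min_eq_left hm
  refine tendsto_const_nhds.congr' (hmin.mono fun m hm => ?_)
  simp only [blendAtZero, hm, one_mul, add_sub_cancel]

lemma tendsto_setIntegral_blendAtZero [MeasurableSpace E] [BorelSpace E]
    {μ : Measure E} [NullSingletonClass μ] {s : Set E} (hs : μ s ≠ ⊤) (hf : ContinuousOn f {0}ᶜ)
    (hC : ∀ z, |f z| ≤ C) (hc : |c| ≤ C) :
    Tendsto (fun m => ∫ z in s, blendAtZero f c m z ∂μ) atTop (𝓝 (∫ z in s, f z ∂μ)) := by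
  have hne : ∀ᵐ z ∂μ.restrict s, z ≠ 0 := Measure.ae_ne _ 0
  exact tendsto_integral_of_dominated_convergence (fun _ => C)
    (fun m => (continuous_blendAtZero hf hC c m).aestronglyMeasurable)
    (integrableOn_const hs)
    (fun m => Eventually.of_forall fun z => abs_blendAtZero_le hC hc m z)
    (hne.mono fun z hz => tendsto_blendAtZero f c hz)

end Homogeneous

section LatticePoints

/-- The lattice point `l` as a complex number, so that `nsq l = ‖toComplex l‖ ^ 2` and `conjPt`
becomes complex conjugation. -/
def toComplex (l : ℤ × ℤ) : ℂ := ⟨l.1, l.2⟩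

lemma toComplex_injective : Function.Injective toComplex := fun _ _ h =>
  Prod.ext (Int.cast_injective (congrArg Complex.re h)) (Int.cast_injective (congrArg Complex.im h))

lemma emb_injective : Function.Injective emb :=
  Prod.map_injective.2 ⟨Nat.cast_injective, Nat.cast_injective⟩

lemma toComplex_emb_ne_zero {k : ℕ × ℕ} (hk : k ≠ (0, 0)) : toComplex (emb k) ≠ 0 := by
  have hzero : toComplex (emb (0, 0)) = 0 := by apply Complex.ext <;> simp [toComplex, emb]
  exact hzero ▸ (toComplex_injective.comp emb_injective).ne hk

lemma tendsto_toComplex_cofinite : Tendsto toComplex cofinite (cobounded ℂ) := by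
  have hprod := Int.tendsto_coe_cofinite.prodMap_coprod Int.tendsto_coe_cofinite
  rw [coprod_cofinite, coprod_cocompact] at hprod
  rw [Metric.cobounded_eq_cocompact]
  exact Complex.equivRealProdCLM.symm.toHomeomorph.isClosedEmbedding.tendsto_cocompact.comp hprod

lemma nsq_eq_norm_sq (l : ℤ × ℤ) : (nsq l : ℝ) = ‖toComplex l‖ ^ 2 := by
  rw [Complex.sq_norm, Complex.normSq_apply]
  simp [nsq, toComplex, sq]

/-- The points of `ℕ₀²` in the closed disc of radius `R`. -/
def latticeQuarterDisc (R : ℕ) : Finset (ℕ × ℕ) :=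
  (Finset.range (R + 1) ×ˢ Finset.range (R + 1)).filter fun l => l.1 ^ 2 + l.2 ^ 2 ≤ R ^ 2

/-- The part of the closed unit disc in the closed first quadrant. -/
def quarterDisc : Set ℂ := {z | 0 ≤ z.re ∧ 0 ≤ z.im ∧ ‖z‖ ≤ 1}

lemma mem_latticeQuarterDisc {R : ℕ} {l : ℕ × ℕ} :
    l ∈ latticeQuarterDisc R ↔ l.1 ^ 2 + l.2 ^ 2 ≤ R ^ 2 := by
  simp only [latticeQuarterDisc, Finset.mem_filter, Finset.mem_product, Finset.mem_range,
    and_iff_right_iff_imp]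
  exact fun h => ⟨by nlinarith, by nlinarith⟩

lemma norm_toComplex_emb_le_iff {R : ℕ} {l : ℕ × ℕ} :
    ‖toComplex (emb l)‖ ≤ R ↔ l ∈ latticeQuarterDisc R := by
  rw [mem_latticeQuarterDisc, ← sq_le_sq₀ (norm_nonneg _) R.cast_nonneg, ← nsq_eq_norm_sq]
  simp only [nsq, emb]
  norm_cast

lemma mem_map_latticeQuarterDisc_iff {n : ℕ} (hn : n ≠ 0) (l : ℤ × ℤ) :
    l ∈ (latticeQuarterDisc n).map ⟨emb, emb_injective⟩ ↔
      (n : ℝ)⁻¹ • toComplex l ∈ quarterDisc := by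
  have hn' : (0 : ℝ) < n := by positivity
  have hquad : (n : ℝ)⁻¹ • toComplex l ∈ quarterDisc ↔ 0 ≤ l.1 ∧ 0 ≤ l.2 ∧ ‖toComplex l‖ ≤ n := by
    simp only [quarterDisc, Set.mem_ofPred_eq, Complex.smul_re, Complex.smul_im, norm_smul,
      smul_eq_mul, norm_inv, Real.norm_natCast, inv_mul_le_one₀ hn',
      mul_nonneg_iff_of_pos_left (inv_pos.2 hn'), toComplex, Int.cast_nonneg_iff]
  simp only [hquad, Finset.mem_map, Function.Embedding.coeFn_mk]
  constructor
  · rintro ⟨m, hm, rfl⟩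
    exact ⟨m.1.cast_nonneg, m.2.cast_nonneg, norm_toComplex_emb_le_iff.2 hm⟩
  · obtain ⟨a, b⟩ := l
    rintro ⟨ha, hb, h⟩
    lift a to ℕ using ha
    lift b to ℕ using hb
    exact ⟨(a, b), norm_toComplex_emb_le_iff.1 h, rfl⟩

lemma isClosed_quarterDisc : IsClosed quarterDisc :=
  (isClosed_le continuous_const Complex.continuous_re).inter
    ((isClosed_le continuous_const Complex.continuous_im).inter
      (isClosed_le continuous_norm continuous_const))

lemma isBounded_quarterDisc : IsBounded quarterDisc :=
  Metric.isBounded_closedBall.subset fun _ hz => mem_closedBall_zero_iff.2 hz.2.2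

lemma convex_quarterDisc : Convex ℝ quarterDisc := by
  have hball : Convex ℝ {z : ℂ | ‖z‖ ≤ 1} := by
    simpa only [Metric.closedBall, dist_zero_right] using convex_closedBall (0 : ℂ) 1
  exact (convex_halfSpace_re_ge 0).inter ((convex_halfSpace_im_ge 0).inter hball)

end LatticePoints

section RiemannSums

lemma inter_smul_span_eq_image_toComplex {s : Set ℂ} {n : ℕ} (hn : n ≠ 0) :
    Complex.measurableEquivPi.symm ⁻¹' s ∩
        (n : ℝ)⁻¹ • (Submodule.span ℤ (Set.range (Pi.basisFun ℝ (Fin 2))) : Set (Fin 2 → ℝ)) =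
      (fun l => Complex.measurableEquivPi ((n : ℝ)⁻¹ • toComplex l)) ''
        {l | (n : ℝ)⁻¹ • toComplex l ∈ s} := by
  have : NeZero n := ⟨hn⟩
  have hn' : (n : ℝ) ≠ 0 := by positivity
  ext x
  rw [Set.mem_inter_iff, ← Submodule.coe_pointwise_smul, SetLike.mem_coe,
    BoxIntegral.unitPartition.mem_smul_span_iff]
  simp only [Set.mem_preimage, Set.mem_image, Set.mem_ofPred_eq, Fin.forall_fin_two,
    Set.mem_range, algebraMap_int_eq, eq_intCast]
  constructor
  · rintro ⟨hx, ⟨a, ha⟩, b, hb⟩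
    have hlattice : (n : ℝ)⁻¹ • toComplex (a, b) = Complex.measurableEquivPi.symm x := by
      apply Complex.ext <;> simp [toComplex, ha, hb, hn']
    exact ⟨(a, b), hlattice ▸ hx, by rw [hlattice, MeasurableEquiv.apply_symm_apply]⟩
  · rintro ⟨l, hl, rfl⟩
    exact ⟨by rwa [MeasurableEquiv.symm_apply_apply], ⟨l.1, by simp [toComplex, hn']⟩,
      ⟨l.2, by simp [toComplex, hn']⟩⟩

lemma volume_frontier_preimage_measurableEquivPi_symm (s : Set ℂ) :
    volume (frontier (Complex.measurableEquivPi.symm ⁻¹' s)) = volume (frontier s) := by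
  have hfrontier : Complex.measurableEquivPi.symm ⁻¹' frontier s =
      frontier (Complex.measurableEquivPi.symm ⁻¹' s) :=
    Complex.basisOneI.equivFun.toContinuousLinearEquiv.toHomeomorph.symm.preimage_frontier s
  rw [← hfrontier]
  exact (Complex.volume_preserving_equiv_pi.symm _).measure_preimage_equiv _

variable {s : Set ℂ} {A : ℕ → Finset (ℤ × ℤ)}

lemma tendsto_sum_div_sq_setIntegral (hbdd : IsBounded s) (hmeas : MeasurableSet s)
    (hfrontier : volume (frontier s) = 0)
    (hA : ∀ n ≠ 0, ∀ l, l ∈ A n ↔ (n : ℝ)⁻¹ • toComplex l ∈ s) {F : ℂ → ℝ} (hF : Continuous F) :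
    Tendsto (fun n : ℕ => (∑ l ∈ A n, F ((n : ℝ)⁻¹ • toComplex l)) / (n : ℝ) ^ 2) atTop
      (𝓝 (∫ z in s, F z)) := by
  let e := Complex.basisOneI.equivFun.toContinuousLinearEquiv
  have hsymm : Continuous Complex.measurableEquivPi.symm := e.symm.continuous
  have hbdd' : IsBounded (Complex.measurableEquivPi.symm ⁻¹' s) :=
    e.symm.antilipschitz.isBounded_preimage hbdd
  have key := tendsto_tsum_div_pow_atTop_integral (Complex.measurableEquivPi.symm ⁻¹' s)
    (fun x => F (Complex.measurableEquivPi.symm x)) (hF.comp hsymm) hbdd'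
    (Complex.measurableEquivPi.symm.measurable hmeas)
    (by rwa [volume_frontier_preimage_measurableEquivPi_symm])
  rw [(Complex.volume_preserving_equiv_pi.symm _).setIntegral_preimage_emb
    Complex.measurableEquivPi.symm.measurableEmbedding] at key
  refine key.congr' ?_
  filter_upwards [eventually_ne_atTop 0] with n hn
  have hinj : Function.Injective fun l =>
      Complex.measurableEquivPi ((n : ℝ)⁻¹ • toComplex l) :=
    Complex.measurableEquivPi.injective.comp
      ((smul_right_injective ℂ (by positivity)).comp toComplex_injective)
  have hset : {l | (n : ℝ)⁻¹ • toComplex l ∈ s} = A n := by ext l; simp [hA n hn]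
  rw [inter_smul_span_eq_image_toComplex hn,
    tsum_image (fun x => F (Complex.measurableEquivPi.symm x)) hinj.injOn, hset]
  simp only [MeasurableEquiv.symm_apply_apply, Fintype.card_fin]
  rw [Finset.tsum_subtype' (A n) (fun l => F ((n : ℝ)⁻¹ • toComplex l))]

lemma tendsto_sum_div_sq_setIntegral_of_continuousOn (hbdd : IsBounded s) (hmeas : MeasurableSet s)
    (hfrontier : volume (frontier s) = 0)
    (hA : ∀ n ≠ 0, ∀ l, l ∈ A n ↔ (n : ℝ)⁻¹ • toComplex l ∈ s) {f : ℂ → ℝ} {C : ℝ}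
    (hf : ContinuousOn f {0}ᶜ) (hC : ∀ z, |f z| ≤ C) :
    Tendsto (fun n : ℕ => (∑ l ∈ A n, f ((n : ℝ)⁻¹ • toComplex l)) / (n : ℝ) ^ 2) atTop
      (𝓝 (∫ z in s, f z)) := by
  have hC0 : 0 ≤ C := (abs_nonneg _).trans (hC 0)
  have hsum (c : ℝ) (m : ℕ) := tendsto_sum_div_sq_setIntegral hbdd hmeas hfrontier hA
    (continuous_blendAtZero hf hC c m)
  have hint {c : ℝ} (hc : |c| ≤ C) :=
    tendsto_setIntegral_blendAtZero (μ := volume) (s := s) hbdd.measure_lt_top.ne hf hC hc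
  refine tendsto_of_tendsto_lower_of_tendsto_upper (fun m n => ?_) (fun m n => ?_)
    (hsum (-C)) (hsum C) (hint (by rw [abs_neg, abs_of_nonneg hC0])) (hint (abs_of_nonneg hC0).le)
  · gcongr with l
    exact blendAtZero_le_self (abs_le.1 (hC _)).1 m
  · gcongr with l
    exact self_le_blendAtZero (abs_le.1 (hC _)).2 m

lemma tendsto_sum_latticeQuarterDisc_div_sq {f : ℂ → ℝ} (hf : ContinuousOn f {0}ᶜ)
    (hom : ∀ r : ℝ, 0 < r → ∀ z, f (r • z) = f z) :
    Tendsto (fun n : ℕ => (∑ l ∈ latticeQuarterDisc n, f (toComplex (emb l))) / (n : ℝ) ^ 2) atTop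
      (𝓝 (∫ z in quarterDisc, f z)) := by
  obtain ⟨C, hC⟩ := exists_forall_abs_le_of_homogeneous hf hom
  refine (tendsto_sum_div_sq_setIntegral_of_continuousOn isBounded_quarterDisc
    isClosed_quarterDisc.measurableSet (convex_quarterDisc.addHaar_frontier volume)
    (fun n hn => mem_map_latticeQuarterDisc_iff hn) hf hC).congr' ?_
  filter_upwards [eventually_gt_atTop 0] with n hn
  have hn' : (0 : ℝ) < (n : ℝ)⁻¹ := by positivity
  simp only [Finset.sum_map, Function.Embedding.coeFn_mk, hom _ hn']

end RiemannSums

section AveragesOverLR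

lemma LR_subset_latticeQuarterDisc (k : ℕ × ℕ) (R : ℕ) : LR k R ⊆ latticeQuarterDisc R :=
  fun _ hl => mem_latticeQuarterDisc.2 (Finset.mem_filter.1 hl).2.2.1

lemma card_latticeQuarterDisc_sdiff_LR_le (k : ℕ × ℕ) (R : ℕ) :
    (latticeQuarterDisc R \ LR k R).card ≤ 2 * R + 3 := by
  have hsub : latticeQuarterDisc R \ LR k R ⊆
      {k.1} ×ˢ Finset.range (R + 1) ∪ (Finset.range (R + 1) ×ˢ {k.2} ∪ {(0, 0)}) := by
    rintro ⟨a, b⟩ hl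
    simp only [LR, latticeQuarterDisc, Finset.mem_filter, Finset.mem_sdiff, Finset.mem_product,
      Finset.mem_union, Finset.mem_singleton, Prod.mk.injEq] at *
    have hpos : ¬ (a = 0 ∧ b = 0) → 0 < a ^ 2 + b ^ 2 := fun h => by
      rcases not_and_or.1 h with h | h <;> positivity
    tauto
  have hcard := (Finset.card_le_card hsub).trans ((Finset.card_union_le _ _).trans
    (Nat.add_le_add_left (Finset.card_union_le _ _) _))
  simp only [Finset.card_product, Finset.card_singleton, Finset.card_range] at hcard
  omega

variable {f : ℂ → ℝ}

lemma tendsto_sum_LR_div_sq (k : ℕ × ℕ) (hf : ContinuousOn f {0}ᶜ)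
    (hom : ∀ r : ℝ, 0 < r → ∀ z, f (r • z) = f z) :
    Tendsto (fun n : ℕ => (∑ l ∈ LR k n, f (toComplex (emb l))) / (n : ℝ) ^ 2) atTop
      (𝓝 (∫ z in quarterDisc, f z)) := by
  obtain ⟨C, hC⟩ := exists_forall_abs_le_of_homogeneous hf hom
  have hC0 : 0 ≤ C := (abs_nonneg _).trans (hC 0)
  have hsdiff : Tendsto (fun n : ℕ =>
      (∑ l ∈ latticeQuarterDisc n \ LR k n, f (toComplex (emb l))) / (n : ℝ) ^ 2)
      atTop (𝓝 0) := by
    have hbound : Tendsto (fun n : ℕ => C * (2 * (n : ℝ)⁻¹ + 3 * (n : ℝ)⁻¹ ^ 2)) atTop (𝓝 0) := by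
      have hinv := tendsto_inv_atTop_nhds_zero_nat (𝕜 := ℝ)
      simpa using ((hinv.const_mul 2).add ((hinv.pow 2).const_mul 3)).const_mul C
    refine squeeze_zero_norm' ?_ hbound
    filter_upwards [eventually_ne_atTop 0] with n hn
    have hcard : ((latticeQuarterDisc n \ LR k n).card : ℝ) ≤ 2 * n + 3 :=
      mod_cast card_latticeQuarterDisc_sdiff_LR_le k n
    have hsum : ‖∑ l ∈ latticeQuarterDisc n \ LR k n, f (toComplex (emb l))‖ ≤
        (latticeQuarterDisc n \ LR k n).card * C := by
      rw [← nsmul_eq_mul, ← Finset.sum_const]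
      exact norm_sum_le_of_le _ fun l _ => hC _
    have hn' : (n : ℝ) ≠ 0 := by positivity
    calc ‖(∑ l ∈ latticeQuarterDisc n \ LR k n, f (toComplex (emb l))) / (n : ℝ) ^ 2‖
        ≤ (2 * n + 3) * C / (n : ℝ) ^ 2 := by
          rw [norm_div, norm_pow, Real.norm_natCast]
          gcongr
          exact hsum.trans (by gcongr)
      _ = C * (2 * (n : ℝ)⁻¹ + 3 * (n : ℝ)⁻¹ ^ 2) := by field_simp
  simpa [← Finset.sum_sdiff (LR_subset_latticeQuarterDisc k _), add_div] using
    (tendsto_sum_latticeQuarterDisc_div_sq hf hom).sub hsdiff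

lemma polarCoord_symm_mem_quarterDisc_iff {p : ℝ × ℝ} (hp : p ∈ polarCoord.target) :
    Complex.polarCoord.symm p ∈ quarterDisc ↔ p ∈ Set.Ioc 0 1 ×ˢ Set.Icc 0 (Real.pi / 2) := by
  have hr : 0 < p.1 := hp.1
  have harg : (Complex.polarCoord.symm p).arg = p.2 := by
    rw [Complex.polarCoord_symm_apply]
    exact_mod_cast Complex.arg_mul_cos_add_sin_mul_I hr ⟨hp.2.1, hp.2.2.le⟩
  rw [quarterDisc, Set.mem_ofPred_eq, ← Complex.abs_arg_le_pi_div_two_iff, ← Complex.arg_nonneg_iff,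
    harg, Complex.norm_polarCoord_symm, abs_of_pos hr, Set.mem_prod, Set.mem_Ioc, Set.mem_Icc]
  constructor
  · exact fun ⟨h₁, h₀, hr₁⟩ => ⟨⟨hr, hr₁⟩, h₀, (abs_le.1 h₁).2⟩
  · exact fun ⟨⟨_, hr₁⟩, h₀, h₁⟩ => ⟨by rwa [abs_of_nonneg h₀], h₀, hr₁⟩

lemma setIntegral_quarterDisc_of_homogeneous (hom : ∀ r : ℝ, 0 < r → ∀ z, f (r • z) = f z) :
    ∫ z in quarterDisc, f z =
      1 / 2 * ∫ t in (0 : ℝ)..Real.pi / 2, f (Real.cos t + Real.sin t * Complex.I) := by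
  have hpolar : ∀ p ∈ polarCoord.target,
      p.1 • quarterDisc.indicator f (Complex.polarCoord.symm p) =
        (Set.Ioc 0 1 ×ˢ Set.Icc 0 (Real.pi / 2)).indicator
          (fun p => p.1 * f (Real.cos p.2 + Real.sin p.2 * Complex.I)) p := fun p hp => by
    by_cases h : Complex.polarCoord.symm p ∈ quarterDisc
    · rw [Set.indicator_of_mem h, Complex.polarCoord_symm_apply, ← Complex.real_smul,
        hom _ hp.1, Set.indicator_of_mem ((polarCoord_symm_mem_quarterDisc_iff hp).1 h),
        smul_eq_mul]
    · rw [Set.indicator_of_notMem h, smul_zero,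
        Set.indicator_of_notMem ((polarCoord_symm_mem_quarterDisc_iff hp).not.1 h)]
  have hrect : Set.Ioc 0 1 ×ˢ Set.Icc 0 (Real.pi / 2) ⊆ polarCoord.target := fun p hp =>
    ⟨hp.1.1, by linarith [hp.2.1, Real.pi_pos], by linarith [hp.2.2, Real.pi_pos]⟩
  calc ∫ z in quarterDisc, f z
      = ∫ p in polarCoord.target, p.1 • quarterDisc.indicator f (Complex.polarCoord.symm p) := by
        rw [Complex.integral_comp_polarCoord_symm, integral_indicator
          isClosed_quarterDisc.measurableSet]
    _ = ∫ p in Set.Ioc 0 1 ×ˢ Set.Icc 0 (Real.pi / 2),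
          p.1 * f (Real.cos p.2 + Real.sin p.2 * Complex.I) := by
        rw [setIntegral_congr_fun polarCoord.open_target.measurableSet hpolar,
          setIntegral_indicator (measurableSet_Ioc.prod measurableSet_Icc),
          Set.inter_eq_right.2 hrect]
    _ = (∫ r in Set.Ioc (0 : ℝ) 1, r) *
          ∫ t in Set.Icc 0 (Real.pi / 2), f (Real.cos t + Real.sin t * Complex.I) := by
        rw [Measure.volume_eq_prod]
        exact setIntegral_prod_mul (μ := volume) (ν := volume) (fun r : ℝ => r)
          (fun t : ℝ => f (Real.cos t + Real.sin t * Complex.I)) _ _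
    _ = 1 / 2 * ∫ t in (0 : ℝ)..Real.pi / 2, f (Real.cos t + Real.sin t * Complex.I) := by
        rw [integral_Icc_eq_integral_Ioc, ← intervalIntegral.integral_of_le zero_le_one,
          ← intervalIntegral.integral_of_le Real.pi_div_two_pos.le, integral_id]
        norm_num

lemma measureReal_quarterDisc : volume.real quarterDisc = Real.pi / 4 := by
  have h := setIntegral_quarterDisc_of_homogeneous (f := fun _ => 1) fun _ _ _ => rfl
  simp only [setIntegral_const, intervalIntegral.integral_const, smul_eq_mul, mul_one] at h
  rw [h]
  ring

lemma tendsto_card_LR_div_sq (k : ℕ × ℕ) :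
    Tendsto (fun n : ℕ => ((LR k n).card : ℝ) / (n : ℝ) ^ 2) atTop (𝓝 (Real.pi / 4)) := by
  simpa [measureReal_quarterDisc] using
    tendsto_sum_LR_div_sq (f := fun _ => 1) k continuousOn_const fun _ _ _ => rfl

lemma tendsto_card_LR_atTop (k : ℕ × ℕ) : Tendsto (fun n => (LR k n).card) atTop atTop := by
  have hsq : Tendsto (fun n : ℕ => (n : ℝ) ^ 2) atTop atTop :=
    (tendsto_pow_atTop two_ne_zero).comp tendsto_natCast_atTop_atTop
  refine tendsto_natCast_atTop_iff.1 (((tendsto_card_LR_div_sq k).pos_mul_atTop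
    (by positivity) hsq).congr' ?_)
  filter_upwards [eventually_ne_atTop 0] with n hn using div_mul_cancel₀ _ (by positivity)

lemma tendsto_expect_LR_setAverage (k : ℕ × ℕ) (hf : ContinuousOn f {0}ᶜ)
    (hom : ∀ r : ℝ, 0 < r → ∀ z, f (r • z) = f z) :
    Tendsto (fun n : ℕ => 𝔼 l ∈ LR k n, f (toComplex (emb l))) atTop
      (𝓝 (⨍ z in quarterDisc, f z)) := by
  rw [setAverage_eq, measureReal_quarterDisc, smul_eq_mul, inv_mul_eq_div]
  refine ((tendsto_sum_LR_div_sq k hf hom).div (tendsto_card_LR_div_sq k)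
    (by positivity)).congr' ?_
  filter_upwards [eventually_ne_atTop 0] with n hn
  rw [Finset.expect_eq_sum_div_card]
  exact div_div_div_cancel_right₀ (by positivity) _ _

end AveragesOverLR

section AsymptoticCurvature

/-- The standard symplectic form on `ℂ`, extending `cross` from lattice points to the plane. -/
def crossForm (w z : ℂ) : ℝ := w.re * z.im - w.im * z.re

/-- The limit of `Ccurv` as its second argument goes to infinity in the direction `z`: the
denominators `‖w ± z‖ ^ 2` and `‖w ± conj z‖ ^ 2` are replaced by `‖z‖ ^ 2`. -/
noncomputable def asymptoticCurvature (w z : ℂ) : ℝ :=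
  -(crossForm w z ^ 4 + crossForm w (conj z) ^ 4) / (2 * STorus * ‖w‖ ^ 2 * ‖z‖ ^ 4)

lemma cross_eq_crossForm (k l : ℤ × ℤ) :
    (cross k l : ℝ) = crossForm (toComplex k) (toComplex l) := by
  simp [cross, crossForm, toComplex]

lemma toComplex_add (k l : ℤ × ℤ) : toComplex (k + l) = toComplex k + toComplex l := by
  apply Complex.ext <;> simp [toComplex]

lemma toComplex_sub (k l : ℤ × ℤ) : toComplex (k - l) = toComplex k - toComplex l := by
  apply Complex.ext <;> simp [toComplex]

lemma toComplex_conjPt (l : ℤ × ℤ) : toComplex (conjPt l) = conj (toComplex l) := by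
  apply Complex.ext <;> simp [toComplex, conjPt]

lemma STorus_ne_zero : STorus ≠ 0 := by
  unfold STorus
  positivity

lemma crossForm_neg (w z : ℂ) : crossForm w (-z) = -crossForm w z := by
  simp only [crossForm, Complex.neg_re, Complex.neg_im]
  ring

lemma crossForm_smul (w : ℂ) (r : ℝ) (z : ℂ) : crossForm w (r • z) = r * crossForm w z := by
  simp only [crossForm, Complex.smul_re, Complex.smul_im, smul_eq_mul]
  ring

lemma continuous_crossForm (w : ℂ) : Continuous (crossForm w) := by
  unfold crossForm
  fun_prop

lemma abs_crossForm_le (w z : ℂ) : |crossForm w z| ≤ ‖w‖ * ‖z‖ := by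
  have h : crossForm w z = (conj w * z).im := by simp [crossForm, sub_eq_add_neg]
  rw [h, ← Complex.norm_conj w, ← norm_mul]
  exact Complex.abs_im_le_norm _

lemma asymptoticCurvature_smul (w : ℂ) {r : ℝ} (hr : 0 < r) (z : ℂ) :
    asymptoticCurvature w (r • z) = asymptoticCurvature w z := by
  have hconj : conj (r • z) = r • conj z := by simp
  simp only [asymptoticCurvature, hconj, crossForm_smul, norm_smul, Real.norm_of_nonneg hr.le]
  rw [show -((r * crossForm w z) ^ 4 + (r * crossForm w (conj z)) ^ 4) =
      r ^ 4 * -(crossForm w z ^ 4 + crossForm w (conj z) ^ 4) by ring,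
    show 2 * STorus * ‖w‖ ^ 2 * (r * ‖z‖) ^ 4 = r ^ 4 * (2 * STorus * ‖w‖ ^ 2 * ‖z‖ ^ 4) by ring,
    mul_div_mul_left _ _ (by positivity)]

lemma continuousOn_asymptoticCurvature {w : ℂ} (hw : w ≠ 0) :
    ContinuousOn (asymptoticCurvature w) {0}ᶜ := by
  have hS := STorus_ne_zero
  have hconj := (continuous_crossForm w).comp Complex.continuous_conj
  refine ContinuousOn.div (((continuous_crossForm w).pow 4).add (hconj.pow 4)).neg.continuousOn
    (by fun_prop) fun z hz => ?_
  have hz' : z ≠ 0 := hz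
  positivity

lemma crossForm_pow_four_add_conj (w z : ℂ) :
    crossForm w z ^ 4 + crossForm w (conj z) ^ 4 =
      2 * w.re ^ 4 * z.im ^ 4 + 12 * (w.re ^ 2 * w.im ^ 2) * (z.im ^ 2 * z.re ^ 2) +
        2 * w.im ^ 4 * z.re ^ 4 := by
  simp only [crossForm, Complex.conj_re, Complex.conj_im]
  ring

lemma integral_crossForm_pow_four (w : ℂ) :
    ∫ t in (0 : ℝ)..Real.pi / 2, (crossForm w (Real.cos t + Real.sin t * Complex.I) ^ 4 +
      crossForm w (conj (Real.cos t + Real.sin t * Complex.I : ℂ)) ^ 4) =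
      3 * Real.pi / 8 * ‖w‖ ^ 4 := by
  have hre (t : ℝ) : (Real.cos t + Real.sin t * Complex.I : ℂ).re = Real.cos t := by
    rw [← Complex.mk_eq_add_mul_I]
  have him (t : ℝ) : (Real.cos t + Real.sin t * Complex.I : ℂ).im = Real.sin t := by
    rw [← Complex.mk_eq_add_mul_I]
  have hsin : ∫ t in (0 : ℝ)..Real.pi / 2, Real.sin t ^ 4 = 3 * Real.pi / 16 := by
    rw [integral_sin_pow, integral_sin_sq, Real.sin_zero, Real.cos_zero, Real.sin_pi_div_two,
      Real.cos_pi_div_two]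
    ring
  have hcos : ∫ t in (0 : ℝ)..Real.pi / 2, Real.cos t ^ 4 = 3 * Real.pi / 16 := by
    rw [integral_cos_pow, integral_cos_sq, Real.sin_zero, Real.cos_zero, Real.sin_pi_div_two,
      Real.cos_pi_div_two]
    ring
  have hmixed : ∫ t in (0 : ℝ)..Real.pi / 2, Real.sin t ^ 2 * Real.cos t ^ 2 = Real.pi / 16 := by
    rw [integral_sin_sq_mul_cos_sq, show 4 * (Real.pi / 2) = 2 * Real.pi by ring, Real.sin_two_pi,
      mul_zero, Real.sin_zero]
    ring
  have hnorm : ‖w‖ ^ 4 = (w.re ^ 2 + w.im ^ 2) ^ 2 := by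
    rw [show ‖w‖ ^ 4 = (‖w‖ ^ 2) ^ 2 by ring, Complex.sq_norm, Complex.normSq_apply]
    ring
  simp_rw [crossForm_pow_four_add_conj, hre, him]
  rw [intervalIntegral.integral_add, intervalIntegral.integral_add]
  · rw [intervalIntegral.integral_const_mul, intervalIntegral.integral_const_mul,
      intervalIntegral.integral_const_mul, hsin, hcos, hmixed, hnorm]
    ring
  all_goals exact Continuous.intervalIntegrable (by fun_prop) _ _

lemma setAverage_asymptoticCurvature (w : ℂ) :
    ⨍ z in quarterDisc, asymptoticCurvature w z = -(3 * ‖w‖ ^ 2) / (8 * STorus) := by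
  have hcircle (t : ℝ) : ‖(Real.cos t + Real.sin t * Complex.I : ℂ)‖ = 1 := by
    simp
  rw [setAverage_eq, measureReal_quarterDisc, setIntegral_quarterDisc_of_homogeneous
    fun r hr => asymptoticCurvature_smul w hr]
  simp only [asymptoticCurvature, hcircle, one_pow, mul_one]
  rw [intervalIntegral.integral_div, intervalIntegral.integral_neg, integral_crossForm_pow_four]
  rcases eq_or_ne w 0 with rfl | hw
  · simp
  · have := Real.pi_pos
    have hS := STorus_ne_zero
    simp only [smul_eq_mul]
    field_simp
    norm_num

end AsymptoticCurvature

section CurvatureAsymptotics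

lemma tendsto_norm_sq_div_norm_add_sq {E : Type*} [NormedAddCommGroup E] (w : E) :
    Tendsto (fun z => ‖z‖ ^ 2 / ‖w + z‖ ^ 2) (cobounded E) (𝓝 1) := by
  have hinv : Tendsto (fun z : E => ‖w‖ * ‖z‖⁻¹) (cobounded E) (𝓝 0) := by
    simpa using (tendsto_norm_cobounded_atTop.inv_tendsto_atTop).const_mul ‖w‖
  have hdiff : Tendsto (fun z => ‖w + z‖ / ‖z‖ - 1) (cobounded E) (𝓝 0) := by
    refine squeeze_zero_norm' ?_ hinv
    filter_upwards [eventually_ne_cobounded 0] with z hz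
    have hz' : ‖z‖ ≠ 0 := norm_ne_zero_iff.2 hz
    rw [div_sub_one hz', norm_div, norm_norm, ← div_eq_mul_inv]
    gcongr
    simpa using abs_norm_sub_norm_le (w + z) z
  have hratio : Tendsto (fun z => ‖w + z‖ / ‖z‖) (cobounded E) (𝓝 1) := by
    simpa using hdiff.add_const 1
  simpa [← div_pow] using (hratio.inv₀ one_ne_zero).pow 2

/-- The error made in one of the four terms of `Ccurv` by replacing `‖w + z‖` with `‖z‖`, up to
the common factor `-(1 / (4 * STorus * ‖w‖ ^ 2))`. -/
noncomputable def denominatorError (w z : ℂ) : ℝ :=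
  crossForm w z ^ 4 / (‖z‖ ^ 2 * ‖w + z‖ ^ 2) - crossForm w z ^ 4 / ‖z‖ ^ 4

lemma tendsto_denominatorError (w : ℂ) : Tendsto (denominatorError w) (cobounded ℂ) (𝓝 0) := by
  have hbdd : ∀ z, |crossForm w z ^ 4 / ‖z‖ ^ 4| ≤ ‖w‖ ^ 4 := fun z => by
    rw [abs_div, abs_pow, abs_pow, abs_norm]
    refine div_le_of_le_mul₀ (by positivity) (by positivity) ?_
    rw [← mul_pow]
    exact pow_le_pow_left₀ (abs_nonneg _) (abs_crossForm_le w z) 4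
  have hratio : Tendsto (fun z => ‖z‖ ^ 2 / ‖w + z‖ ^ 2 - 1) (cobounded ℂ) (𝓝 0) := by
    simpa using (tendsto_norm_sq_div_norm_add_sq w).sub_const 1
  refine (bdd_le_mul_tendsto_zero' _ (Eventually.of_forall hbdd) hratio).congr' ?_
  filter_upwards [eventually_ne_cobounded 0] with z hz
  rw [denominatorError, mul_sub, mul_one, div_mul_div_comm,
    show ‖z‖ ^ 4 * ‖w + z‖ ^ 2 = ‖z‖ ^ 2 * ‖w + z‖ ^ 2 * ‖z‖ ^ 2 by ring,
    mul_div_mul_right _ _ (pow_ne_zero 2 (norm_ne_zero_iff.2 hz))]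

lemma Ccurv_sub_asymptoticCurvature (k l : ℤ × ℤ) :
    Ccurv k l - asymptoticCurvature (toComplex k) (toComplex l) =
      -(1 / (4 * STorus * ‖toComplex k‖ ^ 2)) *
        (denominatorError (toComplex k) (toComplex l) +
          denominatorError (toComplex k) (-toComplex l) +
          denominatorError (toComplex k) (conj (toComplex l)) +
          denominatorError (toComplex k) (-conj (toComplex l))) := by
  simp only [Ccurv, asymptoticCurvature, denominatorError, nsq_eq_norm_sq, cross_eq_crossForm,
    toComplex_add, toComplex_sub, toComplex_conjPt, crossForm_neg, norm_neg, Complex.norm_conj,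
    ← sub_eq_add_neg]
  ring

lemma tendsto_Ccurv_sub_asymptoticCurvature (k : ℤ × ℤ) :
    Tendsto (fun l => Ccurv k l - asymptoticCurvature (toComplex k) (toComplex l)) cofinite
      (𝓝 0) := by
  have herror := tendsto_denominatorError (toComplex k)
  have hneg : Tendsto (fun z : ℂ => -z) (cobounded ℂ) (cobounded ℂ) := tendsto_neg_cobounded
  have hconj : Tendsto (fun z : ℂ => conj z) (cobounded ℂ) (cobounded ℂ) :=
    tendsto_norm_atTop_iff_cobounded.1 (by simpa using tendsto_norm_cobounded_atTop)
  have hsum := ((herror.add (herror.comp hneg)).add (herror.comp hconj)).add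
    (herror.comp (hneg.comp hconj))
  simp only [add_zero] at hsum
  simp_rw [Ccurv_sub_asymptoticCurvature]
  rw [← mul_zero (-(1 / (4 * STorus * ‖toComplex k‖ ^ 2)))]
  exact (hsum.comp tendsto_toComplex_cofinite).const_mul _

end CurvatureAsymptotics

theorem ricci_curvature_klein (k : ℕ × ℕ) (hk : k ≠ (0, 0)) :
    Filter.Tendsto
      (fun R : ℕ => (1 / ((LR k R).card : ℝ)) * ∑ l ∈ LR k R, Ccurv (emb k) (emb l))
      Filter.atTop
      (nhds (-(3 * ((k.1 : ℝ) ^ 2 + (k.2 : ℝ) ^ 2)) / (8 * STorus))) := by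
  set w := toComplex (emb k)
  have hw : w ≠ 0 := toComplex_emb_ne_zero hk
  have herror : Tendsto (fun R => 𝔼 l ∈ LR k R,
      (Ccurv (emb k) (emb l) - asymptoticCurvature w (toComplex (emb l)))) atTop (𝓝 0) :=
    tendsto_expect_zero_of_tendsto_cofinite (tendsto_card_LR_atTop k)
      ((tendsto_Ccurv_sub_asymptoticCurvature (emb k)).comp emb_injective.tendsto_cofinite)
  have hmain := tendsto_expect_LR_setAverage k (continuousOn_asymptoticCurvature hw)
    fun r hr => asymptoticCurvature_smul w hr
  have hnorm : (k.1 : ℝ) ^ 2 + (k.2 : ℝ) ^ 2 = ‖w‖ ^ 2 := by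
    rw [← nsq_eq_norm_sq]
    simp [nsq, emb]
  simp_rw [one_div_mul_eq_div, ← Finset.expect_eq_sum_div_card, hnorm,
    ← setAverage_asymptoticCurvature]
  simpa [Finset.expect_sub_distrib] using herror.add hmain
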